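/- arXiv:1312.7375 — 7 statements merged into one kernel-verified Lean document; each statement's English description precedes it below -/
import Mathlib

section
/- Let k ≥ 1 and let (γ_1,c_1),…,(γ_k,c_k) be pairwise distinct pairs of real numbers with γ_i > 0 for every i. Suppose real numbers d_{00}, d_{01}, d_{10}, d_{11}, …, d_{k0}, d_{k1} satisfy d_{00} + d_{01}·y + Σ_{i=1}^k (d_{i0} + d_{i1}·y)·(1/(1+e^{−γ_i(y−c_i)})) = 0 for all y ∈ ℝ. Then d_{i0} = d_{i1} = 0 for every i = 0, 1, …, k. -/
/-- The logistic transition function `G(y; γ, c) = 1/(1+e^{-γ(y-c)})`. -/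
noncomputable def logisticG (γ c y : ℝ) : ℝ := 1 / (1 + Real.exp (-γ * (y - c)))

/-!
Extended to `ℂ`, the function `G(·; γ, c)` has a pole exactly at each point `c + (nπ/γ) i` with `n`
odd. Clearing denominators turns a linear relation between logistic functions with entire
coefficients into an identity between entire functions, which persists from `ℝ` to `ℂ`; at a pole
of one of the functions that is not a pole of any other, it forces the coefficient of that function
to vanish. If `γ` is maximal among the slopes, each of the other functions shares at most one of
the poles `c + (pπ/γ) i` with `p` prime, because `p * (γ' / γ)` with `0 < γ' / γ < 1` can be an
integer for at most one prime `p`. A polynomial coefficient therefore has infinitely many zeros.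
-/

open Polynomial

section ClearingDenominators

variable {ι K : Type*} [DecidableEq ι]

lemma add_sum_div_mul_prod [Semifield K] {s : Finset ι} {D : ι → K} (hD : ∀ i ∈ s, D i ≠ 0)
    (a : K) (b : ι → K) :
    (a + ∑ i ∈ s, b i / D i) * ∏ i ∈ s, D i =
      a * ∏ i ∈ s, D i + ∑ i ∈ s, b i * ∏ j ∈ s.erase i, D j := by
  rw [add_mul, Finset.sum_mul]
  congr 1
  refine Finset.sum_congr rfl fun i hi => ?_
  rw [← Finset.mul_prod_erase s D hi, ← mul_assoc, div_mul_cancel₀ _ (hD i hi)]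

lemma mul_prod_add_sum_mul_prod_erase_of_eq_zero [CommSemiring K] {s : Finset ι} {D : ι → K}
    {i : ι} (hi : i ∈ s) (hD : D i = 0) (a : K) (b : ι → K) :
    a * ∏ j ∈ s, D j + ∑ j ∈ s, b j * ∏ l ∈ s.erase j, D l = b i * ∏ j ∈ s.erase i, D j := by
  rw [Finset.prod_eq_zero hi hD, mul_zero, zero_add]
  refine Finset.sum_eq_single_of_mem i hi fun j _ hji => ?_
  rw [Finset.prod_eq_zero (Finset.mem_erase.2 ⟨hji.symm, hi⟩) hD, mul_zero]

end ClearingDenominators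

lemma eq_zero_of_differentiable_of_forall_ofReal {E : Type*} [NormedAddCommGroup E]
    [NormedSpace ℂ E] [CompleteSpace E] {F : ℂ → E} (hF : Differentiable ℂ F)
    (h : ∀ y : ℝ, F y = 0) : F = 0 := by
  have hanalytic : AnalyticOnNhd ℂ F Set.univ := fun z _ => hF.analyticAt z
  refine hanalytic.eq_of_frequently_eq (z₀ := (0 : ℝ)) analyticOnNhd_const ?_
  exact (Complex.ofRealCLM.hasDerivAt.tendsto_nhdsNE (by simp)).frequently
    (Filter.Frequently.of_forall h)

lemma polynomial_eq_zero_of_forall_ofReal {P : ℂ[X]} (h : ∀ y : ℝ, P.eval (y : ℂ) = 0) : P = 0 :=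
  P.eq_zero_of_infinite_isRoot <|
    (Set.infinite_range_of_injective Complex.ofReal_injective).mono (Set.range_subset_iff.2 h)

lemma C_add_C_mul_X_eq_zero_iff {R : Type*} [Semiring R] {a b : R} :
    C a + C b * X = 0 ↔ a = 0 ∧ b = 0 := by
  refine ⟨fun h => ⟨?_, ?_⟩, fun ⟨ha, hb⟩ => by simp [ha, hb]⟩
  · simpa using congrArg (coeff · 0) h
  · simpa [coeff_C] using congrArg (coeff · 1) h

/-- The denominator of `G(·; γ, c)` as an entire function. -/
noncomputable def logisticDenom (γ c : ℝ) (z : ℂ) : ℂ := 1 + Complex.exp (-γ * (z - c))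

/-- The point `c + (nπ/γ) i`, which for odd `n` is a pole of `G(·; γ, c)`; at even `n` the function
is regular. -/
noncomputable def logisticPole (γ c : ℝ) (n : ℤ) : ℂ := ⟨c, n * Real.pi / γ⟩

lemma differentiable_logisticDenom (γ c : ℝ) : Differentiable ℂ (logisticDenom γ c) := by
  unfold logisticDenom
  fun_prop

lemma ofReal_logisticG (γ c y : ℝ) : (logisticG γ c y : ℂ) = 1 / logisticDenom γ c y := by
  simp [logisticG, logisticDenom]

lemma logisticDenom_ofReal_ne_zero (γ c y : ℝ) : logisticDenom γ c y ≠ 0 := by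
  have hpos : 1 + Real.exp (-γ * (y - c)) ≠ 0 := by positivity
  unfold logisticDenom
  exact_mod_cast hpos

lemma logisticDenom_eq_zero_iff {γ c : ℝ} (hγ : γ ≠ 0) {z : ℂ} :
    logisticDenom γ c z = 0 ↔ ∃ n : ℤ, Odd n ∧ z = logisticPole γ c n := by
  have hexp : logisticDenom γ c z = 0 ↔
      ∃ m : ℤ, -γ * (z - c) = Real.pi * Complex.I + m * (2 * Real.pi * Complex.I) := by
    rw [← Complex.exp_eq_exp_iff_exists_int, Complex.exp_pi_mul_I, logisticDenom, add_comm,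
      add_eq_zero_iff_eq_neg]
  have hpole (m : ℤ) : -γ * (z - c) = Real.pi * Complex.I + m * (2 * Real.pi * Complex.I) ↔
      z = logisticPole γ c (-(2 * m + 1)) := by
    have hγ' : (γ : ℂ) ≠ 0 := mod_cast hγ
    rw [logisticPole, Complex.mk_eq_add_mul_I]
    push_cast
    constructor
    · intro h
      field_simp
      linear_combination -h
    · rintro rfl
      field_simp
      ring
  simp only [hexp, hpole]
  constructor
  · rintro ⟨m, rfl⟩
    exact ⟨_, (odd_two_mul_add_one m).neg, rfl⟩
  · rintro ⟨n, hn, rfl⟩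
    obtain ⟨m, hm⟩ := hn.neg
    exact ⟨m, by rw [← hm, neg_neg]⟩

lemma logisticPole_eq_logisticPole_iff {γ γ' c c' : ℝ} (hγ : γ ≠ 0) (hγ' : γ' ≠ 0) {n n' : ℤ} :
    logisticPole γ c n = logisticPole γ' c' n' ↔ c = c' ∧ n * γ' = n' * γ := by
  have hpi : Real.pi ≠ 0 := Real.pi_ne_zero
  simp only [logisticPole, Complex.mk.injEq, div_eq_div_iff hγ hγ', mul_right_comm _ Real.pi,
    mul_left_inj' hpi]

lemma logisticPole_injective {γ : ℝ} (hγ : γ ≠ 0) (c : ℝ) :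
    Function.Injective (logisticPole γ c) := fun n n' h => by
  simpa [hγ] using (logisticPole_eq_logisticPole_iff hγ hγ).1 h

lemma subsingleton_setOf_prime_mul_eq_intCast {x : ℝ} (hx₀ : 0 < x) (hx₁ : x < 1) :
    {p : ℕ | p.Prime ∧ ∃ n : ℤ, p * x = n}.Subsingleton := by
  rintro p ⟨hp, n, hn⟩ q ⟨hq, m, hm⟩
  by_contra hpq
  have hp₀ : (0 : ℝ) < p := mod_cast hp.pos
  have hn₀ : 0 < n := by exact_mod_cast hn ▸ mul_pos hp₀ hx₀
  have hnp : n < p := by exact_mod_cast hn ▸ mul_lt_of_lt_one_right hp₀ hx₁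
  have hcross : q * n = p * m := by
    have : (q * n : ℝ) = p * m := by rw [← hn, ← hm]; ring
    exact_mod_cast this
  have hcoprime : IsCoprime (p : ℤ) q := ((Nat.coprime_primes hp hq).2 hpq).isCoprime
  exact hnp.not_ge (Int.le_of_dvd hn₀ (hcoprime.dvd_of_dvd_mul_left ⟨m, hcross⟩))

lemma subsingleton_setOf_prime_logisticDenom_logisticPole_eq_zero {γ γ' c c' : ℝ} (hγ' : 0 < γ')
    (hle : γ' ≤ γ) (hne : (γ', c') ≠ (γ, c)) :
    {p : ℕ | p.Prime ∧ logisticDenom γ' c' (logisticPole γ c p) = 0}.Subsingleton := by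
  have hγ : 0 < γ := hγ'.trans_le hle
  rintro p ⟨hp, hpz⟩ q ⟨hq, hqz⟩
  have shared {r : ℕ} (hr : logisticDenom γ' c' (logisticPole γ c r) = 0) :
      c = c' ∧ ∃ n : ℤ, r * (γ' / γ) = n := by
    obtain ⟨n, -, hn⟩ := (logisticDenom_eq_zero_iff hγ'.ne').1 hr
    obtain ⟨hc, hrn⟩ := (logisticPole_eq_logisticPole_iff hγ.ne' hγ'.ne').1 hn
    refine ⟨hc, n, ?_⟩
    rw [← mul_div_assoc, div_eq_iff hγ.ne']
    exact_mod_cast hrn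
  obtain ⟨rfl, hpn⟩ := shared hpz
  have hlt : γ' < γ := hle.lt_of_ne fun h => hne (by rw [h])
  exact subsingleton_setOf_prime_mul_eq_intCast (div_pos hγ' hγ) ((div_lt_one hγ).2 hlt)
    ⟨hp, hpn⟩ ⟨hq, (shared hqz).2⟩

section LinearRelation

variable {ι : Type*} {γ c : ι → ℝ} {s : Finset ι} {i : ι}

lemma coeff_eq_zero_of_sum_mul_logisticG_eq_zero {f₀ : ℂ → ℂ} {f : ι → ℂ → ℂ}
    (hf₀ : Differentiable ℂ f₀) (hf : ∀ j ∈ s, Differentiable ℂ (f j))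
    (h : ∀ y : ℝ, f₀ y + ∑ j ∈ s, f j y * logisticG (γ j) (c j) y = 0)
    (hi : i ∈ s) {z : ℂ} (hzi : logisticDenom (γ i) (c i) z = 0)
    (hz : ∀ j ∈ s, j ≠ i → logisticDenom (γ j) (c j) z ≠ 0) : f i z = 0 := by
  classical
  let D (z : ℂ) (j : ι) : ℂ := logisticDenom (γ j) (c j) z
  have hD (j : ι) : Differentiable ℂ (D · j) := differentiable_logisticDenom (γ j) (c j)
  let F (z : ℂ) : ℂ := f₀ z * ∏ j ∈ s, D z j + ∑ j ∈ s, f j z * ∏ l ∈ s.erase j, D z l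
  have hF : Differentiable ℂ F := by
    fun_prop
  have hFreal (y : ℝ) : F y = 0 := by
    have hy := h y
    simp only [ofReal_logisticG, mul_one_div] at hy
    simp only [F]
    rw [← add_sum_div_mul_prod fun j _ => logisticDenom_ofReal_ne_zero (γ j) (c j) y, hy, zero_mul]
  have hprod : f i z * ∏ j ∈ s.erase i, D z j = 0 := by
    rw [← mul_prod_add_sum_mul_prod_erase_of_eq_zero hi hzi (f₀ z) (f · z)]
    exact congrFun (eq_zero_of_differentiable_of_forall_ofReal hF hFreal) z
  refine (mul_eq_zero.1 hprod).resolve_right (Finset.prod_ne_zero_iff.2 fun j hj => ?_)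
  exact hz j (Finset.mem_of_mem_erase hj) (Finset.ne_of_mem_erase hj)

lemma infinite_setOf_odd_logisticDenom_logisticPole_ne_zero (hγ : ∀ j ∈ s, 0 < γ j)
    (hmax : ∀ j ∈ s, γ j ≤ γ i) (hne : ∀ j ∈ s, j ≠ i → (γ j, c j) ≠ (γ i, c i)) :
    {n : ℕ | Odd n ∧
      ∀ j ∈ s, j ≠ i → logisticDenom (γ j) (c j) (logisticPole (γ i) (c i) n) ≠ 0}.Infinite := by
  classical
  let shared (j : ι) : Set ℕ :=
    {p | p.Prime ∧ logisticDenom (γ j) (c j) (logisticPole (γ i) (c i) p) = 0}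
  have hshared : (⋃ j ∈ s.erase i, shared j).Finite :=
    (s.erase i).finite_toSet.biUnion fun j hj => by
      obtain ⟨hji, hjs⟩ := Finset.mem_erase.1 hj
      exact (subsingleton_setOf_prime_logisticDenom_logisticPole_eq_zero (hγ j hjs) (hmax j hjs)
        (hne j hjs hji)).finite
  refine (Nat.infinite_setOfPred_prime.sdiff (hshared.insert 2)).mono ?_
  rintro p ⟨hp, hpn⟩
  simp only [Set.mem_insert_iff, Set.mem_iUnion, not_or, not_exists] at hpn
  exact ⟨hp.odd_of_ne_two hpn.1, fun j hjs hji hj =>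
    hpn.2 j (Finset.mem_erase.2 ⟨hji, hjs⟩) ⟨hp, hj⟩⟩

lemma polynomial_eq_zero_of_sum_mul_logisticG_eq_zero {P₀ : ℂ[X]} {P : ι → ℂ[X]}
    (hγ : ∀ j ∈ s, 0 < γ j) (hi : i ∈ s) (hmax : ∀ j ∈ s, γ j ≤ γ i)
    (hne : ∀ j ∈ s, j ≠ i → (γ j, c j) ≠ (γ i, c i))
    (h : ∀ y : ℝ, P₀.eval (y : ℂ) + ∑ j ∈ s, (P j).eval (y : ℂ) * logisticG (γ j) (c j) y = 0) :
    P i = 0 := by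
  have hγi : γ i ≠ 0 := (hγ i hi).ne'
  have hinj : Function.Injective fun n : ℕ => logisticPole (γ i) (c i) n :=
    (logisticPole_injective hγi (c i)).comp Nat.cast_injective
  refine (P i).eq_zero_of_infinite_isRoot <|
    ((infinite_setOf_odd_logisticDenom_logisticPole_ne_zero hγ hmax hne).image
      hinj.injOn).mono ?_
  rintro _ ⟨n, ⟨hodd, hn⟩, rfl⟩
  exact coeff_eq_zero_of_sum_mul_logisticG_eq_zero (f := fun j z => (P j).eval z)
    P₀.differentiable (fun j _ => (P j).differentiable) h hi
    ((logisticDenom_eq_zero_iff hγi).2 ⟨n, mod_cast hodd, rfl⟩) hn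

end LinearRelation

theorem logistic_affine_combination_eq_zero_general {ι : Type*} [Fintype ι] {γ c : ι → ℝ}
    (hγ : ∀ i, 0 < γ i) (hdist : Pairwise fun i j => (γ i, c i) ≠ (γ j, c j))
    {P₀ : ℂ[X]} {P : ι → ℂ[X]}
    (h : ∀ y : ℝ, P₀.eval (y : ℂ) + ∑ i, (P i).eval (y : ℂ) * logisticG (γ i) (c i) y = 0) :
    P₀ = 0 ∧ ∀ i, P i = 0 := by
  classical
  have hP : ∀ i, P i = 0 := by
    by_contra! hsupport
    let s : Finset ι := {i | P i ≠ 0}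
    have hs : s.Nonempty := by simpa [s, Finset.filter_nonempty_iff] using hsupport
    obtain ⟨i, hi, hmax⟩ := s.exists_max_image γ hs
    refine (Finset.mem_filter.1 hi).2 <| polynomial_eq_zero_of_sum_mul_logisticG_eq_zero
      (fun j _ => hγ j) hi hmax (fun j _ hji => hdist hji) (P₀ := P₀) fun y => ?_
    rw [← h y, Finset.sum_subset s.subset_univ]
    intro j _ hj
    simp_all [s]
  exact ⟨polynomial_eq_zero_of_forall_ofReal fun y => by simpa [hP] using h y, hP⟩

/-- If `d₀₀ + d₀₁ y + ∑ i (dᵢ₀ + dᵢ₁ y) G(y; γᵢ, cᵢ) = 0` for all real `y`, where the pairs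
`(γᵢ, cᵢ)` are pairwise distinct with `γᵢ > 0`, then all coefficients vanish. -/
theorem logistic_affine_combination_eq_zero
    (k : ℕ) (hk : 1 ≤ k) (γ c : Fin k → ℝ)
    (hγ : ∀ i, 0 < γ i)
    (hdist : ∀ i j : Fin k, i ≠ j → (γ i, c i) ≠ (γ j, c j))
    (d00 d01 : ℝ) (d0 d1 : Fin k → ℝ)
    (h : ∀ y : ℝ,
      d00 + d01 * y + ∑ i, (d0 i + d1 i * y) * logisticG (γ i) (c i) y = 0) :
    d00 = 0 ∧ d01 = 0 ∧ ∀ i, d0 i = 0 ∧ d1 i = 0 := by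
  have hpoly := logistic_affine_combination_eq_zero_general hγ hdist
    (P₀ := C (d00 : ℂ) + C (d01 : ℂ) * X) (P := fun i => C (d0 i : ℂ) + C (d1 i : ℂ) * X)
    fun y => by simpa using mod_cast h y
  simpa [C_add_C_mul_X_eq_zero_iff, and_assoc] using hpoly
end

section
/- Let γ > 0 and c ∈ ℝ. For every s with 0 < s < γ, the two-sided Laplace transform of the logistic distribution function satisfies ∫_{−∞}^{∞} e^{−s y} · (1/(1+e^{−γ(y−c)})) dy = (π/γ) · e^{−c s} / sin(π s/γ). -/
open MeasureTheory Real

/-!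
The sigmoid `σ` maps `ℝ` onto `(0, 1)` with `σ' = σ (1 - σ)`, so the substitution `x = σ u` turns
the Beta integral into `B(a, b) = ∫ σ(u) ^ a σ(-u) ^ b du`. Since `σ(-u) = σ(u) e^{-u}`, the choice
`(1 - a, a)` makes the integrand `e^{-au} σ(u)`, and Euler's reflection formula evaluates
`B(1 - a, a) = Γ(1 - a) Γ(a) = π / sin (π a)`.
-/

section ChangeOfVariables

variable {E : Type*} [NormedAddCommGroup E] [NormedSpace ℝ E]

lemma integral_comp_mul_left_sub_right (f : ℝ → E) (γ c : ℝ) :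
    ∫ y : ℝ, f (γ * (y - c)) = |γ⁻¹| • ∫ u : ℝ, f u := by
  rw [integral_sub_right_eq_self (fun y ↦ f (γ * y)) c, Measure.integral_comp_mul_left]

lemma integral_sigmoid_mul_smul_comp (f : ℝ → E) :
    ∫ u : ℝ, (sigmoid u * sigmoid (-u)) • f (sigmoid u) = ∫ x in Set.Ioo 0 1, f x := by
  rw [← range_sigmoid, ← Set.image_univ, integral_image_eq_integral_abs_deriv_smul
    MeasurableSet.univ (fun u _ ↦ (hasDerivAt_sigmoid u).hasDerivWithinAt)
    sigmoid_injective.injOn, setIntegral_univ]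
  simp only [← sigmoid_neg, abs_of_pos (mul_pos (sigmoid_pos _) (sigmoid_pos _))]

end ChangeOfVariables

lemma ofReal_sigmoid_ne_zero (u : ℝ) : (sigmoid u : ℂ) ≠ 0 :=
  Complex.ofReal_ne_zero.2 (sigmoid_pos u).ne'

lemma integral_sigmoid_cpow_mul_sigmoid_neg_cpow (a b : ℂ) :
    ∫ u : ℝ, (sigmoid u : ℂ) ^ a * (sigmoid (-u) : ℂ) ^ b = Complex.betaIntegral a b := by
  rw [Complex.betaIntegral, intervalIntegral.integral_of_le zero_le_one,
    integral_Ioc_eq_integral_Ioo, ← integral_sigmoid_mul_smul_comp]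
  refine integral_congr_ae (.of_forall fun u ↦ ?_)
  have hu := ofReal_sigmoid_ne_zero u
  have hu' := ofReal_sigmoid_ne_zero (-u)
  have hsub : 1 - (sigmoid u : ℂ) = sigmoid (-u) := by simp [sigmoid_neg]
  simp only [hsub, Complex.real_smul, Complex.ofReal_mul, Complex.cpow_sub _ _ hu,
    Complex.cpow_sub _ _ hu', Complex.cpow_one]
  field_simp

lemma ofReal_sigmoid_neg_cpow (u : ℝ) (a : ℂ) :
    (sigmoid (-u) : ℂ) ^ a = (sigmoid u : ℂ) ^ a * Complex.exp (-a * u) := by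
  have hexp : ((exp (-u) : ℝ) : ℂ) ^ a = Complex.exp (-a * u) := by
    rw [Complex.cpow_def_of_ne_zero (Complex.ofReal_ne_zero.2 (exp_ne_zero _)),
      ← Complex.ofReal_log (exp_pos _).le, log_exp]
    push_cast
    ring_nf
  rw [← sigmoid_mul_rexp_neg, Complex.ofReal_mul,
    Complex.mul_cpow_ofReal_nonneg (sigmoid_nonneg u) (exp_pos _).le, hexp]

lemma betaIntegral_one_sub_self {a : ℂ} (ha₀ : 0 < a.re) (ha₁ : a.re < 1) :
    Complex.betaIntegral (1 - a) a = π / Complex.sin (π * a) := by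
  have ha : 0 < (1 - a).re := by simpa using ha₁
  rw [Complex.betaIntegral_eq_Gamma_mul_div _ _ ha ha₀, sub_add_cancel, Complex.Gamma_one, div_one,
    mul_comm, Complex.Gamma_mul_Gamma_one_sub]

lemma integral_cexp_neg_mul_sigmoid {a : ℂ} (ha₀ : 0 < a.re) (ha₁ : a.re < 1) :
    ∫ u : ℝ, Complex.exp (-a * u) * sigmoid u = π / Complex.sin (π * a) := by
  rw [← betaIntegral_one_sub_self ha₀ ha₁, ← integral_sigmoid_cpow_mul_sigmoid_neg_cpow]
  refine integral_congr_ae (.of_forall fun u ↦ ?_)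
  calc Complex.exp (-a * u) * sigmoid u
      = (sigmoid u : ℂ) ^ (1 - a + a) * Complex.exp (-a * u) := by
        rw [sub_add_cancel, Complex.cpow_one, mul_comm]
    _ = (sigmoid u : ℂ) ^ (1 - a) * (sigmoid (-u) : ℂ) ^ a := by
        rw [Complex.cpow_add _ _ (ofReal_sigmoid_ne_zero u), ofReal_sigmoid_neg_cpow, mul_assoc]

theorem laplace_transform_logistic_cdf_general (γ c : ℝ) (s : ℂ) (hs : 0 < s.re) (hsγ : s.re < γ) :
    ∫ y : ℝ, Complex.exp (-s * y) * ((1 / (1 + exp (-γ * (y - c))) : ℝ) : ℂ) =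
      (π / γ) * Complex.exp (-c * s) / Complex.sin (π * s / γ) := by
  have hγ : 0 < γ := hs.trans hsγ
  have hγ' : (γ : ℂ) ≠ 0 := Complex.ofReal_ne_zero.2 hγ.ne'
  have ha₀ : 0 < (s / γ).re := by rw [Complex.div_ofReal_re]; positivity
  have ha₁ : (s / γ).re < 1 := by rwa [Complex.div_ofReal_re, div_lt_one hγ]
  let f (u : ℝ) : ℂ := Complex.exp (-(s / γ) * u) * sigmoid u
  have hf (y : ℝ) : Complex.exp (-s * y) * ((1 / (1 + exp (-γ * (y - c))) : ℝ) : ℂ) =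
      Complex.exp (-c * s) * f (γ * (y - c)) := by
    have hexponent : -s * y = -c * s + -(s / γ) * (γ * (y - c) : ℝ) := by
      push_cast
      field_simp
      ring
    rw [hexponent, Complex.exp_add, mul_assoc, one_div, neg_mul γ, ← sigmoid_def]
  simp_rw [hf]
  rw [integral_const_mul, integral_comp_mul_left_sub_right,
    integral_cexp_neg_mul_sigmoid ha₀ ha₁, abs_of_pos (inv_pos.2 hγ), Complex.real_smul,
    Complex.ofReal_inv, mul_div_assoc (π : ℂ) s]
  ring

/-- Two-sided Laplace transform of the logistic distribution function: for `0 < s < γ`,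
`∫ e^{-sy} / (1 + e^{-γ(y-c)}) dy = (π/γ) e^{-cs} / sin(πs/γ)`. -/
theorem laplace_transform_logistic_cdf
    (γ c s : ℝ) (hγ : 0 < γ) (hs : 0 < s) (hsγ : s < γ) :
    ∫ y : ℝ, Real.exp (-s * y) * (1 / (1 + Real.exp (-γ * (y - c)))) =
      (Real.pi / γ) * Real.exp (-c * s) / Real.sin (Real.pi * s / γ) := by
  exact_mod_cast laplace_transform_logistic_cdf_general γ c s hs hsγ
end

section
/- Let σ > 0 and γ > 0 be real numbers and let a, b, c, d ∈ ℝ. If a·x² + b + (c·x² + d)·F(σx, γ) = 0 for every x ∈ ℝ, then a = b = c = d = 0. -/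
/-- The smooth transition function of the STGARCH model:
`F(x, γ) = 1/(1+e^{γx}) - 1/2`. -/
noncomputable def stgarchF (x γ : ℝ) : ℝ := 1 / (1 + Real.exp (γ * x)) - 1 / 2

/-!
As `x ↦ F(σx, γ)` is odd while both quadratics are even, the even and the odd part of the identity
vanish separately. Off `0` the factor `F(σx, γ)` is nonzero, so both quadratics vanish there.
-/

theorem eq_zero_and_eq_zero_of_even_add_odd_eq_zero {α β : Type*} [Neg α] [AddCommGroup β]
    [IsAddTorsionFree β] {f g : α → β} (hf : f.Even) (hg : g.Odd) (h : f + g = 0) :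
    f = 0 ∧ g = 0 := by
  have hg_even : g.Even := fun x ↦ by
    rw [eq_neg_of_add_eq_zero_right h, Pi.neg_apply, Pi.neg_apply, hf.eq]
  have hg_zero : g = 0 := Function.zero_of_even_and_odd hg_even hg
  exact ⟨by simpa only [hg_zero, add_zero] using h, hg_zero⟩

section Quadratic

variable {R : Type*} [CommRing R] [NoZeroDivisors R] [CharZero R] {a b c d : R}

theorem coeffs_eq_zero_of_mul_sq_add_eq_zero (h : ∀ x ≠ 0, a * x ^ 2 + b = 0) :
    a = 0 ∧ b = 0 := by
  have h_one : a * 1 ^ 2 + b = 0 := h 1 one_ne_zero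
  have h_two : a * 2 ^ 2 + b = 0 := h 2 two_ne_zero
  have h_three : a * 3 = 0 := by linear_combination h_two - h_one
  have ha : a = 0 := (mul_eq_zero.mp h_three).resolve_right (OfNat.ofNat_ne_zero 3)
  exact ⟨ha, by simpa only [ha, zero_mul, zero_add] using h_one⟩

theorem coeffs_eq_zero_of_mul_sq_add_add_mul_odd_eq_zero {f : R → R} (hf : f.Odd)
    (hf_ne : ∀ x ≠ 0, f x ≠ 0) (h : ∀ x, a * x ^ 2 + b + (c * x ^ 2 + d) * f x = 0) :
    a = 0 ∧ b = 0 ∧ c = 0 ∧ d = 0 := by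
  have even_quadratic (u v : R) : (fun x ↦ u * x ^ 2 + v).Even := fun x ↦ by
    simp only [neg_sq]
  obtain ⟨h_even, h_odd⟩ := eq_zero_and_eq_zero_of_even_add_odd_eq_zero (even_quadratic a b)
    ((even_quadratic c d).mul_odd hf) (funext h)
  obtain ⟨ha, hb⟩ := coeffs_eq_zero_of_mul_sq_add_eq_zero fun x _ ↦ congrFun h_even x
  obtain ⟨hc, hd⟩ := coeffs_eq_zero_of_mul_sq_add_eq_zero fun x hx ↦
    (mul_eq_zero.mp (congrFun h_odd x)).resolve_right (hf_ne x hx)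
  exact ⟨ha, hb, hc, hd⟩

end Quadratic

theorem stgarchF_eq_sigmoid_sub (x γ : ℝ) :
    stgarchF x γ = Real.sigmoid (-(γ * x)) - 1 / 2 := by
  rw [stgarchF, Real.sigmoid_def, neg_neg, one_div (1 + _)]

theorem stgarchF_neg (x γ : ℝ) : stgarchF (-x) γ = -stgarchF x γ := by
  rw [stgarchF_eq_sigmoid_sub, stgarchF_eq_sigmoid_sub, mul_neg, Real.sigmoid_neg (-(γ * x))]
  ring

theorem stgarchF_eq_zero_iff {x γ : ℝ} : stgarchF x γ = 0 ↔ γ = 0 ∨ x = 0 := by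
  rw [stgarchF_eq_sigmoid_sub, sub_eq_zero, one_div, ← Real.sigmoid_zero, Real.sigmoid_inj,
    neg_eq_zero, mul_eq_zero]

theorem stgarch_identity_coeffs_eq_zero_general
    (σ γ a b c d : ℝ) (hσ : σ ≠ 0) (hγ : γ ≠ 0)
    (h : ∀ x : ℝ, a * x ^ 2 + b + (c * x ^ 2 + d) * stgarchF (σ * x) γ = 0) :
    a = 0 ∧ b = 0 ∧ c = 0 ∧ d = 0 := by
  have h_odd : (fun x ↦ stgarchF (σ * x) γ).Odd := fun x ↦ by
    simp only [mul_neg, stgarchF_neg]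
  have h_ne : ∀ x ≠ 0, stgarchF (σ * x) γ ≠ 0 := fun x hx ↦ by
    simp only [ne_eq, stgarchF_eq_zero_iff, mul_eq_zero, hγ, hσ, hx, or_self, not_false_eq_true]
  exact coeffs_eq_zero_of_mul_sq_add_add_mul_odd_eq_zero h_odd h_ne h

/-- If `a x² + b + (c x² + d) F(σx, γ) = 0` for all real `x`, with `σ > 0` and `γ > 0`,
then `a = b = c = d = 0`. -/
theorem stgarch_identity_coeffs_eq_zero
    (σ γ a b c d : ℝ) (hσ : 0 < σ) (hγ : 0 < γ)
    (h : ∀ x : ℝ, a * x ^ 2 + b + (c * x ^ 2 + d) * stgarchF (σ * x) γ = 0) :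
    a = 0 ∧ b = 0 ∧ c = 0 ∧ d = 0 :=
  stgarch_identity_coeffs_eq_zero_general σ γ a b c d hσ.ne' hγ.ne' h
end

section
/- Let σ > 0, γ > 0, γ° > 0 be real numbers and let c°, B° ∈ ℝ with (c°, B°) ≠ (0, 0). If (c°·σ²·x² + B°)·(1/(1+e^{γσx}) − 1/(1+e^{γ°σx})) = 0 for every x ∈ ℝ, then γ = γ°. -/
theorem one_div_one_add_exp_injective :
    Function.Injective fun y : ℝ => 1 / (1 + Real.exp y) := by
  intro y z hyz
  simpa only [one_div, inv_inj, add_right_inj, Real.exp_eq_exp] using hyz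

theorem exists_ne_zero_mul_sq_add_ne_zero {R : Type*} [Ring R] [NoZeroDivisors R] [CharZero R]
    {a b : R} (hab : (a, b) ≠ (0, 0)) : ∃ x ≠ 0, a * x ^ 2 + b ≠ 0 := by
  by_contra! hvanish
  have at_one : a + b = 0 := by simpa using hvanish 1 one_ne_zero
  have at_two : a * 2 ^ 2 + b = 0 := hvanish 2 two_ne_zero
  have three_mul_eq_zero : 3 * a = 0 := by
    calc 3 * a = (a * 2 ^ 2 + b) - (a + b) := by noncomm_ring
      _ = 0 := by rw [at_one, at_two, sub_zero]
  have ha : a = 0 := (mul_eq_zero.mp three_mul_eq_zero).resolve_left (OfNat.ofNat_ne_zero 3)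
  have hb : b = 0 := by rwa [ha, zero_add] at at_one
  exact hab (by rw [ha, hb])

theorem stgarch_smoothness_identifiable_general {σ γ γ0 c0 B0 : ℝ} (hσ : σ ≠ 0)
    (hne : (c0, B0) ≠ (0, 0))
    (h : ∀ x : ℝ,
      (c0 * σ ^ 2 * x ^ 2 + B0) *
        (1 / (1 + Real.exp (γ * σ * x)) - 1 / (1 + Real.exp (γ0 * σ * x))) = 0) :
    γ = γ0 := by
  obtain ⟨y, hy, hweight⟩ := exists_ne_zero_mul_sq_add_ne_zero hne
  have hx : σ * (y / σ) = y := mul_div_cancel₀ y hσ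
  have hlogistic : 1 / (1 + Real.exp (γ * y)) - 1 / (1 + Real.exp (γ0 * y)) = 0 := by
    have hproduct := h (y / σ)
    rw [mul_assoc c0, ← mul_pow, mul_assoc γ, mul_assoc γ0, hx] at hproduct
    exact (mul_eq_zero.mp hproduct).resolve_left hweight
  exact mul_right_cancel₀ hy (one_div_one_add_exp_injective (sub_eq_zero.mp hlogistic))

/-- Identification of the smoothness parameter in the STGARCH model: if
`(c° σ² x² + B°)(1/(1+e^{γσx}) − 1/(1+e^{γ°σx})) = 0` for all real `x`, where
`σ > 0`, `γ > 0`, `γ° > 0` and `(c°, B°) ≠ (0, 0)`, then `γ = γ°`. -/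
theorem stgarch_smoothness_identifiable
    (σ γ γ0 c0 B0 : ℝ) (hσ : 0 < σ) (hγ : 0 < γ) (hγ0 : 0 < γ0)
    (hne : (c0, B0) ≠ (0, 0))
    (h : ∀ x : ℝ,
      (c0 * σ ^ 2 * x ^ 2 + B0) *
        (1 / (1 + Real.exp (γ * σ * x)) - 1 / (1 + Real.exp (γ0 * σ * x))) = 0) :
    γ = γ0 :=
  stgarch_smoothness_identifiable_general hσ.ne' hne h
end

section
/- Let α° > 0, α ≥ 0 be real numbers and let γ, γ° ∈ [−1, 1]. If α°·(|x| − γ°·x)² = α·(|x| − γ·x)² for every x ∈ ℝ, then α = α° and γ = γ°. -/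
/-! If two positive scales produce the same impact at `x`, then, because the shape `φ` is
increasing, the smaller scale has the larger argument `|x| - γ * x`. At `x = 1` and `x = -1` this
bounds the difference of the asymmetry parameters from both sides, so they agree, and then the
scales agree because the impact is nonzero somewhere. -/

section NewsImpact

open Set

variable {K : Type*} [Ring K] [LinearOrder K] {φ : K → K} {α α₀ γ γ₀ x : K}

/-- The news impact function of an asymmetric GARCH model with scale `α` and asymmetry parameter
`γ`. The shape `φ` is left arbitrary so as to cover all powers at once; the AGARCH model with
power 2 has `φ u = u ^ 2`. -/
def newsImpact (φ : K → K) (α γ x : K) : K := α * φ (|x| - γ * x)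

variable [IsStrictOrderedRing K]

lemma abs_sub_mul_nonneg (hγ : γ ∈ Icc (-1) 1) : 0 ≤ |x| - γ * x := by
  refine sub_nonneg.2 ((le_abs_self _).trans ?_)
  rw [abs_mul]
  exact mul_le_of_le_one_left (abs_nonneg x) (abs_le.2 hγ)

lemma map_abs_sub_mul_nonneg (hφ : MonotoneOn φ (Ici 0)) (hφ₀ : 0 ≤ φ 0)
    (hγ : γ ∈ Icc (-1) 1) : 0 ≤ φ (|x| - γ * x) :=
  have hu : 0 ≤ |x| - γ * x := abs_sub_mul_nonneg hγ
  hφ₀.trans (hφ self_mem_Ici hu hu)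

lemma exists_newsImpact_pos (hφ : StrictMonoOn φ (Ici 0)) (hφ₀ : 0 ≤ φ 0) (hα : 0 < α) (γ : K) :
    ∃ x, 0 < newsImpact φ α γ x := by
  obtain ⟨x, hx⟩ : ∃ x, 0 < |x| - γ * x := by
    rcases lt_or_ge γ 1 with hγ | hγ
    · exact ⟨1, by simpa using hγ⟩
    · exact ⟨-1, by simpa using add_pos one_pos (one_pos.trans_le hγ)⟩
  exact ⟨x, mul_pos hα (hφ₀.trans_lt (hφ self_mem_Ici hx.le hx))⟩

lemma scale_pos_of_newsImpact_pos (hφ : MonotoneOn φ (Ici 0)) (hφ₀ : 0 ≤ φ 0)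
    (hγ : γ ∈ Icc (-1) 1) (h : 0 < newsImpact φ α γ x) : 0 < α :=
  pos_of_mul_pos_left h (map_abs_sub_mul_nonneg hφ hφ₀ hγ)

lemma mul_le_mul_of_newsImpact_eq (hφ : StrictMonoOn φ (Ici 0)) (hφ₀ : 0 ≤ φ 0)
    (hγ : γ ∈ Icc (-1) 1) (hγ₀ : γ₀ ∈ Icc (-1) 1) (hα : 0 < α) (hle : α ≤ α₀)
    (h : newsImpact φ α₀ γ₀ x = newsImpact φ α γ x) : γ * x ≤ γ₀ * x := by
  have hmul : α * φ (|x| - γ₀ * x) ≤ α * φ (|x| - γ * x) :=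
    calc α * φ (|x| - γ₀ * x)
      _ ≤ α₀ * φ (|x| - γ₀ * x) :=
        mul_le_mul_of_nonneg_right hle (map_abs_sub_mul_nonneg hφ.monotoneOn hφ₀ hγ₀)
      _ = α * φ (|x| - γ * x) := h
  have harg : |x| - γ₀ * x ≤ |x| - γ * x :=
    (hφ.le_iff_le (abs_sub_mul_nonneg hγ₀) (abs_sub_mul_nonneg hγ)).1
      (le_of_mul_le_mul_left hmul hα)
  exact (sub_le_sub_iff_left _).1 harg

lemma asymmetry_eq_of_newsImpact_eq_of_scale_le (hφ : StrictMonoOn φ (Ici 0)) (hφ₀ : 0 ≤ φ 0)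
    (hγ : γ ∈ Icc (-1) 1) (hγ₀ : γ₀ ∈ Icc (-1) 1) (hα : 0 < α) (hle : α ≤ α₀)
    (h : newsImpact φ α₀ γ₀ = newsImpact φ α γ) : γ = γ₀ := by
  have hmul (x : K) : γ * x ≤ γ₀ * x :=
    mul_le_mul_of_newsImpact_eq hφ hφ₀ hγ hγ₀ hα hle (congrFun h x)
  exact le_antisymm (by simpa using hmul 1) (by simpa using hmul (-1))

theorem agarch_news_impact_identifiable_general (hφ : StrictMonoOn φ (Ici 0)) (hφ₀ : 0 ≤ φ 0)
    (hα₀ : 0 < α₀) (hγ : γ ∈ Icc (-1) 1) (hγ₀ : γ₀ ∈ Icc (-1) 1)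
    (h : newsImpact φ α₀ γ₀ = newsImpact φ α γ) : α = α₀ ∧ γ = γ₀ := by
  obtain ⟨x, hx⟩ := exists_newsImpact_pos hφ hφ₀ hα₀ γ₀
  have hα : 0 < α := scale_pos_of_newsImpact_pos hφ.monotoneOn hφ₀ hγ (h ▸ hx)
  obtain rfl : γ = γ₀ := by
    rcases le_total α α₀ with hle | hle
    · exact asymmetry_eq_of_newsImpact_eq_of_scale_le hφ hφ₀ hγ hγ₀ hα hle h
    · exact (asymmetry_eq_of_newsImpact_eq_of_scale_le hφ hφ₀ hγ₀ hγ hα₀ hle h.symm).symm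
  have hne : φ (|x| - γ * x) ≠ 0 := right_ne_zero_of_mul hx.ne'
  exact ⟨mul_right_cancel₀ hne (congrFun h x).symm, rfl⟩

end NewsImpact

/-- Identifiability of the AGARCH news impact function: if
`α° (|x| − γ° x)² = α (|x| − γ x)²` for all real `x`, where `α° > 0`, `α ≥ 0` and
`γ, γ° ∈ [−1, 1]`, then `α = α°` and `γ = γ°`. -/
theorem agarch_news_impact_identifiable
    (α α0 γ γ0 : ℝ) (hα0 : 0 < α0) (hα : 0 ≤ α)
    (hγ : γ ∈ Set.Icc (-1 : ℝ) 1) (hγ0 : γ0 ∈ Set.Icc (-1 : ℝ) 1)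
    (h : ∀ x : ℝ, α0 * (|x| - γ0 * x) ^ 2 = α * (|x| - γ * x) ^ 2) :
    α = α0 ∧ γ = γ0 := by
  have hsq : StrictMonoOn (fun u : ℝ ↦ u ^ 2) (Set.Ici 0) := pow_left_strictMonoOn₀ two_ne_zero
  exact agarch_news_impact_identifiable_general hsq (sq_nonneg 0) hα0 hγ hγ0 (funext h)
end

section
/- Let θ° = (ω°, α₁°, α₂°, β°, l°) and θ = (ω, α₁, α₂, β, l) belong to Θ = (0,∞) × [0,1)³ × ℕ (so l, l° ≥ 1), and assume α₁° ≠ α₂°. Let S ⊆ ℝ be a set containing at least two distinct elements. If ω + α₁·m + (α₂ − α₁)·(m − l)⁺ + β·λ = ω° + α₁°·m + (α₂° − α₁°)·(m − l°)⁺ + β°·λ for every m ∈ ℕ₀ and every λ ∈ S, then θ = θ°, i.e., ω = ω°, α₁ = α₁°, α₂ = α₂°, β = β°, and l = l°. -/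
/-!
The intensity is affine in `λ`, so two values of `λ` determine `β`, and what remains is a broken
line in `m` with slopes `α₁` and `α₂` and a kink at `l`. Its forward difference is the step function
equal to `α₁` below `l` and to `α₂` from `l` on. As `α₁° ≠ α₂°` and `l° ≥ 1`, this step function
takes both values, so it determines them and the position of the jump. The broken line has value `ω`
at `0`.
-/

open scoped fwdDiff

theorem eq_and_eq_of_forall_add_mul_eq {R ι : Type*} [Ring R] [NoZeroDivisors R] [Nonempty ι]
    {f g : ι → R} {b c : R} {S : Set R} (hS : S.Nontrivial)
    (h : ∀ i, ∀ x ∈ S, f i + b * x = g i + c * x) : f = g ∧ b = c := by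
  obtain ⟨x, hx, y, hy, hxy⟩ := hS
  obtain rfl : b = c := by
    obtain ⟨i⟩ := ‹Nonempty ι›
    have key : b * (x - y) = c * (x - y) := by
      calc b * (x - y) = (f i + b * x) - (f i + b * y) := by noncomm_ring
        _ = (g i + c * x) - (g i + c * y) := by rw [h i x hx, h i y hy]
        _ = c * (x - y) := by noncomm_ring
    exact mul_right_cancel₀ (sub_ne_zero.2 hxy) key
  exact ⟨funext fun i => add_right_cancel (h i x hx), rfl⟩

theorem eq_of_forall_ite_lt_eq {α γ : Type*} [LinearOrder α] [OrderBot α]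
    {l l₀ : α} {s s₀ t t₀ : γ} (hl₀ : ⊥ < l₀) (hne : s₀ ≠ t₀)
    (h : ∀ m, (if m < l then s else t) = if m < l₀ then s₀ else t₀) :
    s = s₀ ∧ t = t₀ ∧ l = l₀ := by
  obtain rfl : t = t₀ := by simpa using h (max l l₀)
  have hl : ⊥ < l := by
    by_contra hl
    exact hne (by simpa [hl, hl₀] using (h ⊥).symm)
  obtain rfl : s = s₀ := by simpa [hl, hl₀] using h ⊥
  refine ⟨rfl, rfl, eq_of_forall_lt_iff fun m => ?_⟩
  calc m < l ↔ (if m < l then s else t) = s := hne.ite_eq_left_iff.symm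
    _ ↔ (if m < l₀ then s else t) = s := by rw [h m]
    _ ↔ m < l₀ := hne.ite_eq_left_iff

section BrokenLine

variable {R : Type*} [Ring R] [LinearOrder R]

/-- The broken line on `ℕ` with intercept `a`, slope `s` below the threshold `l` and slope `t`
above it, written with the hinge `(m - l)⁺` as in the INTGARCH recursion. The difference is taken
in `R`, so it is not truncated. -/
def brokenLine (a s t : R) (l : ℕ) (m : ℕ) : R :=
  a + s * m + (t - s) * max ((m : R) - l) 0

variable [IsStrictOrderedRing R]

theorem brokenLine_zero (a s t : R) (l : ℕ) : brokenLine a s t l 0 = a := by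
  simp [brokenLine]

theorem fwdDiff_max_natCast_sub_zero (l : ℕ) :
    Δ_[1] (fun m : ℕ => max ((m : R) - l) 0) = fun m => if m < l then 0 else 1 := by
  funext m
  rw [fwdDiff]
  split_ifs with hm
  · have hm' : ((m + 1 : ℕ) : R) ≤ l := Nat.cast_le.2 hm
    have hml : (m : R) ≤ l := Nat.cast_le.2 hm.le
    rw [max_eq_right (sub_nonpos.2 hm'), max_eq_right (sub_nonpos.2 hml), sub_self]
  · have hlm : (l : R) ≤ m := Nat.cast_le.2 (not_lt.1 hm)
    have hlm' : (l : R) ≤ (m + 1 : ℕ) := Nat.cast_le.2 ((not_lt.1 hm).trans m.le_succ)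
    rw [max_eq_left (sub_nonneg.2 hlm'), max_eq_left (sub_nonneg.2 hlm), Nat.cast_succ]
    abel

theorem fwdDiff_brokenLine (a s t : R) (l : ℕ) :
    Δ_[1] (brokenLine a s t l) = fun m => if m < l then s else t := by
  funext m
  calc Δ_[1] (brokenLine a s t l) m
      = s + (t - s) * Δ_[1] (fun k : ℕ => max ((k : R) - l) 0) m := by
        simp only [fwdDiff, brokenLine, Nat.cast_succ]
        noncomm_ring
    _ = if m < l then s else t := by
        simp only [fwdDiff_max_natCast_sub_zero]
        split_ifs <;> simp

theorem eq_of_brokenLine_eq {a a₀ s s₀ t t₀ : R} {l l₀ : ℕ} (hl₀ : 0 < l₀)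
    (hne : s₀ ≠ t₀) (h : brokenLine a s t l = brokenLine a₀ s₀ t₀ l₀) :
    a = a₀ ∧ s = s₀ ∧ t = t₀ ∧ l = l₀ := by
  have intercept : a = a₀ := by simpa only [brokenLine_zero] using congrFun h 0
  have step : (fun m => if m < l then s else t) = fun m => if m < l₀ then s₀ else t₀ := by
    simpa only [fwdDiff_brokenLine] using congrArg (Δ_[1]) h
  exact ⟨intercept, eq_of_forall_ite_lt_eq hl₀ hne (congrFun step)⟩

end BrokenLine

theorem intgarch_identifiable_general {R : Type*} [Ring R] [LinearOrder R] [IsStrictOrderedRing R]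
    {ω ω₀ α₁ α₁₀ α₂ α₂₀ β β₀ : R} {l l₀ : ℕ} (hl₀ : 0 < l₀) (hne : α₁₀ ≠ α₂₀)
    {S : Set R} (hS : S.Nontrivial)
    (h : ∀ m : ℕ, ∀ x ∈ S,
      ω + α₁ * m + (α₂ - α₁) * max ((m : R) - l) 0 + β * x =
        ω₀ + α₁₀ * m + (α₂₀ - α₁₀) * max ((m : R) - l₀) 0 + β₀ * x) :
    ω = ω₀ ∧ α₁ = α₁₀ ∧ α₂ = α₂₀ ∧ β = β₀ ∧ l = l₀ := by
  have separated : brokenLine ω α₁ α₂ l = brokenLine ω₀ α₁₀ α₂₀ l₀ ∧ β = β₀ :=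
    eq_and_eq_of_forall_add_mul_eq hS h
  obtain ⟨hline, hβ⟩ := separated
  obtain ⟨hω, hα₁, hα₂, hl⟩ := eq_of_brokenLine_eq hl₀ hne hline
  exact ⟨hω, hα₁, hα₂, hβ, hl⟩

/-- Identifiability of the INTGARCH model parameters: suppose
`θ° = (ω°, α₁°, α₂°, β°, l°)` and `θ = (ω, α₁, α₂, β, l)` lie in
`(0,∞) × [0,1)³ × ℕ` with `α₁° ≠ α₂°`, and `S ⊆ ℝ` contains at least two points. If the
intensity functions coincide on `ℕ₀ × S`, then `θ = θ°`. -/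
theorem intgarch_identifiable
    (ω ω0 α1 α10 α2 α20 β β0 : ℝ) (l l0 : ℕ)
    (hω : 0 < ω) (hω0 : 0 < ω0)
    (hα1 : α1 ∈ Set.Ico (0 : ℝ) 1) (hα10 : α10 ∈ Set.Ico (0 : ℝ) 1)
    (hα2 : α2 ∈ Set.Ico (0 : ℝ) 1) (hα20 : α20 ∈ Set.Ico (0 : ℝ) 1)
    (hβ : β ∈ Set.Ico (0 : ℝ) 1) (hβ0 : β0 ∈ Set.Ico (0 : ℝ) 1)
    (hl : 1 ≤ l) (hl0 : 1 ≤ l0)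
    (hne : α10 ≠ α20)
    (S : Set ℝ) (hS : ∃ a ∈ S, ∃ b ∈ S, a ≠ b)
    (h : ∀ m : ℕ, ∀ lam ∈ S,
      ω + α1 * m + (α2 - α1) * max ((m : ℝ) - l) 0 + β * lam =
        ω0 + α10 * m + (α20 - α10) * max ((m : ℝ) - l0) 0 + β0 * lam) :
    ω = ω0 ∧ α1 = α10 ∧ α2 = α20 ∧ β = β0 ∧ l = l0 :=
  intgarch_identifiable_general hl0 hne hS h
end

section
/- Let θ° = (ω°, α₁°, α₂°, β°, l°) and θ = (ω, α₁, α₂, β, l) belong to Θ = (0,∞) × [0,1)³ × ℕ (so l, l° ≥ 1), and assume α₁° = α₂°. Let S ⊆ ℝ be a set containing at least two distinct elements. If ω + α₁·m + (α₂ − α₁)·(m − l)⁺ + β·λ = ω° + α₁°·m + (α₂° − α₁°)·(m − l°)⁺ + β°·λ for every m ∈ ℕ₀ and every λ ∈ S, then ω = ω°, α₁ = α₁°, α₂ = α₂°, and β = β° (the threshold parameter l need not equal l°). -/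
/-!
The intensity is affine in `λ` with slope `β`, and piecewise affine in the count `m` with slope
`α₁` below the threshold `l` and `α₂` above it. Two points of `S` reveal `β`; since both thresholds
are at least `1`, the step from `m = 0` to `m = 1` reveals `α₁`; a step beyond both thresholds
reveals `α₂`, whether or not the thresholds agree. The value at `m = 0` then leaves only `ω`.
-/

section Intensity

variable {R : Type*} [CommRing R] [LinearOrder R]

/-- The INTGARCH intensity `λ_t` as a function of the previous count `m = X_{t-1}` and the previous
intensity `lam = λ_{t-1}`. The positive part `(m - l)⁺` is taken in `R`. -/
def intgarchIntensity (ω α₁ α₂ β : R) (l m : ℕ) (lam : R) : R :=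
  ω + α₁ * m + (α₂ - α₁) * max ((m : R) - l) 0 + β * lam

theorem intgarchIntensity_sub (ω α₁ α₂ β : R) (l m : ℕ) (x y : R) :
    intgarchIntensity ω α₁ α₂ β l m x - intgarchIntensity ω α₁ α₂ β l m y = β * (x - y) := by
  unfold intgarchIntensity
  ring

variable [IsOrderedRing R]

theorem intgarchIntensity_of_le {l m : ℕ} (h : m ≤ l) (ω α₁ α₂ β x : R) :
    intgarchIntensity ω α₁ α₂ β l m x = ω + α₁ * m + β * x := by
  have hpos : max ((m : R) - l) 0 = 0 := max_eq_right (sub_nonpos.2 (Nat.mono_cast h))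
  rw [intgarchIntensity, hpos, mul_zero, add_zero]

theorem intgarchIntensity_of_ge {l m : ℕ} (h : l ≤ m) (ω α₁ α₂ β x : R) :
    intgarchIntensity ω α₁ α₂ β l m x = ω + α₁ * l + α₂ * (m - l) + β * x := by
  have hpos : max ((m : R) - l) 0 = m - l := max_eq_left (sub_nonneg.2 (Nat.mono_cast h))
  rw [intgarchIntensity, hpos]
  ring

theorem intgarchIntensity_succ_sub_of_lt {l m : ℕ} (h : m < l) (ω α₁ α₂ β x : R) :
    intgarchIntensity ω α₁ α₂ β l (m + 1) x - intgarchIntensity ω α₁ α₂ β l m x = α₁ := by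
  rw [intgarchIntensity_of_le h, intgarchIntensity_of_le h.le]
  push_cast
  ring

theorem intgarchIntensity_succ_sub_of_ge {l m : ℕ} (h : l ≤ m) (ω α₁ α₂ β x : R) :
    intgarchIntensity ω α₁ α₂ β l (m + 1) x - intgarchIntensity ω α₁ α₂ β l m x = α₂ := by
  rw [intgarchIntensity_of_ge (Nat.le_succ_of_le h), intgarchIntensity_of_ge h]
  push_cast
  ring

end Intensity

theorem intgarch_partially_identifiable_general
    {R : Type*} [CommRing R] [LinearOrder R] [IsStrictOrderedRing R]
    {ω ω0 α₁ α₁0 α₂ α₂0 β β0 : R} {l l0 : ℕ} (hl : 1 ≤ l) (hl0 : 1 ≤ l0)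
    {S : Set R} (hS : S.Nontrivial)
    (h : ∀ m : ℕ, ∀ lam ∈ S,
      intgarchIntensity ω α₁ α₂ β l m lam = intgarchIntensity ω0 α₁0 α₂0 β0 l0 m lam) :
    ω = ω0 ∧ α₁ = α₁0 ∧ α₂ = α₂0 ∧ β = β0 := by
  obtain ⟨x, hx, y, hy, hxy⟩ := hS
  have hβ : β = β0 := by
    refine mul_right_cancel₀ (sub_ne_zero.2 hxy) ?_
    rw [← intgarchIntensity_sub ω α₁ α₂ β l 0, h 0 x hx, h 0 y hy, intgarchIntensity_sub]
  have hα₁ : α₁ = α₁0 := by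
    rw [← intgarchIntensity_succ_sub_of_lt hl ω α₁ α₂ β x, h _ x hx, h _ x hx,
      intgarchIntensity_succ_sub_of_lt hl0]
  have hα₂ : α₂ = α₂0 := by
    rw [← intgarchIntensity_succ_sub_of_ge (le_max_left l l0) ω α₁ α₂ β x, h _ x hx, h _ x hx,
      intgarchIntensity_succ_sub_of_ge (le_max_right l l0)]
  have hω : ω = ω0 := by
    have hzero := h 0 x hx
    rw [intgarchIntensity_of_le l.zero_le, intgarchIntensity_of_le l0.zero_le, hα₁, hβ] at hzero
    exact add_right_cancel (add_right_cancel hzero)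
  exact ⟨hω, hα₁, hα₂, hβ⟩

/-- Partial identifiability of the INTGARCH model when no threshold mechanism exists:
suppose `θ° = (ω°, α₁°, α₂°, β°, l°)` and `θ = (ω, α₁, α₂, β, l)` lie in
`(0,∞) × [0,1)³ × ℕ` with `α₁° = α₂°`, and `S ⊆ ℝ` contains at least two points. If the
intensity functions coincide on `ℕ₀ × S`, then all the parameters except possibly the
threshold parameter `l` coincide. -/
theorem intgarch_partially_identifiable
    (ω ω0 α1 α10 α2 α20 β β0 : ℝ) (l l0 : ℕ)
    (hω : 0 < ω) (hω0 : 0 < ω0)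
    (hα1 : α1 ∈ Set.Ico (0 : ℝ) 1) (hα10 : α10 ∈ Set.Ico (0 : ℝ) 1)
    (hα2 : α2 ∈ Set.Ico (0 : ℝ) 1) (hα20 : α20 ∈ Set.Ico (0 : ℝ) 1)
    (hβ : β ∈ Set.Ico (0 : ℝ) 1) (hβ0 : β0 ∈ Set.Ico (0 : ℝ) 1)
    (hl : 1 ≤ l) (hl0 : 1 ≤ l0)
    (heq : α10 = α20)
    (S : Set ℝ) (hS : ∃ a ∈ S, ∃ b ∈ S, a ≠ b)
    (h : ∀ m : ℕ, ∀ lam ∈ S,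
      ω + α1 * m + (α2 - α1) * max ((m : ℝ) - l) 0 + β * lam =
        ω0 + α10 * m + (α20 - α10) * max ((m : ℝ) - l0) 0 + β0 * lam) :
    ω = ω0 ∧ α1 = α10 ∧ α2 = α20 ∧ β = β0 :=
  intgarch_partially_identifiable_general hl hl0 hS h
end
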